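/- arXiv:math/0207266 — 6 statements merged into one kernel-verified Lean document; each statement's English description precedes it below -/
import Mathlib

section
/- For every m ≥ 1 there exists a holomorphic map φ : ℂ → ℂ^m with the following property: every entire function h : ℂ^m → ℂ that vanishes identically on the image φ(ℂ) is identically zero on ℂ^m. In particular, φ(ℂ) is not contained in any proper closed analytic subset of ℂ^m. -/
/-!
Every sequence of values in a complex Banach space is interpolated by an entire function at a given
sequence of distinct points `p n` tending to infinity. The function is a sum of corrections: the
`n`-th one vanishes at the earlier points, repairs the value at `p n`, and is at most `2⁻ⁿ` on a
disc of radius slightly less than `‖p n‖`; this smallness costs nothing, since multiplying by a high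
power of `z / p n` keeps the value at `p n` and destroys everything inside that disc.
Interpolating a dense sequence of a separable space gives an entire curve with dense image, and
already continuous functions are determined by their values on a dense set.
-/

open Filter Metric Polynomial

theorem exists_polynomial_eval_eq_one_norm_eval_le {𝕜 : Type*} [NormedField 𝕜] [ProperSpace 𝕜]
    {s : Finset 𝕜} {p : 𝕜} (hp : p ∉ s) {r ε : ℝ} (hr : r < ‖p‖) (hε : 0 < ε) :
    ∃ q : 𝕜[X], (∀ x ∈ s, q.eval x = 0) ∧ q.eval p = 1 ∧
      ∀ z ∈ closedBall (0 : 𝕜) r, ‖q.eval z‖ ≤ ε := by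
  classical
  let B : 𝕜[X] := Lagrange.basis (insert p s) id p
  have hB_zero (x : 𝕜) (hx : x ∈ s) : B.eval x = 0 :=
    Lagrange.eval_basis_of_ne (v := id) (ne_of_mem_of_not_mem hx hp).symm
      (Finset.mem_insert_of_mem hx)
  have hB_one : B.eval p = 1 :=
    Lagrange.eval_basis_self Function.injective_id.injOn (Finset.mem_insert_self p s)
  rcases eq_or_ne p 0 with rfl | hp0
  · refine ⟨B, hB_zero, hB_one, fun z hz ↦ ?_⟩
    rw [closedBall_eq_empty.2 (hr.trans_eq norm_zero)] at hz
    exact hz.elim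
  obtain ⟨M, hM_pos, hM⟩ : ∃ M > 0, ∀ z ∈ closedBall (0 : 𝕜) r, ‖B.eval z‖ ≤ M := by
    obtain ⟨M, hM⟩ := (isCompact_closedBall (0 : 𝕜) r).exists_bound_of_continuousOn
      B.continuous.continuousOn
    exact ⟨max M 1, by positivity, fun z hz ↦ (hM z hz).trans (le_max_left M 1)⟩
  have hp_pos : 0 < ‖p‖ := norm_pos_iff.2 hp0
  obtain ⟨k, hk⟩ := exists_pow_lt_of_lt_one (div_pos hε hM_pos) ((div_lt_one hp_pos).2 hr)
  refine ⟨(C p⁻¹ * X) ^ k * B, fun x hx ↦ ?_, ?_, fun z hz ↦ ?_⟩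
  · rw [eval_mul, hB_zero x hx, mul_zero]
  · simp [hB_one, hp0]
  · calc ‖((C p⁻¹ * X) ^ k * B).eval z‖ = (‖z‖ / ‖p‖) ^ k * ‖B.eval z‖ := by
          simp [div_eq_inv_mul]
      _ ≤ (r / ‖p‖) ^ k * M := by
          have hz_le : ‖z‖ ≤ r := mem_closedBall_zero_iff.1 hz
          have hr_nonneg : 0 ≤ r := (norm_nonneg z).trans hz_le
          gcongr
          exact hM z hz
      _ ≤ ε := ((lt_div_iff₀ hM_pos).1 hk).le

section Interpolation

variable {E : Type*} [NormedAddCommGroup E] [NormedSpace ℂ E]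

theorem exists_differentiable_eq_norm_le {s : Finset ℂ} {p : ℂ} (hp : p ∉ s) {r ε : ℝ}
    (hr : r < ‖p‖) (hε : 0 < ε) (b : E) :
    ∃ g : ℂ → E, Differentiable ℂ g ∧ (∀ x ∈ s, g x = 0) ∧ g p = b ∧
      ∀ z ∈ closedBall 0 r, ‖g z‖ ≤ ε := by
  obtain ⟨q, hq_zero, hq_one, hq_le⟩ := exists_polynomial_eval_eq_one_norm_eval_le hp hr
    (show 0 < ε / (‖b‖ + 1) by positivity)
  refine ⟨fun z ↦ q.eval z • b, q.differentiable.smul_const b, fun x hx ↦ ?_, ?_, fun z hz ↦ ?_⟩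
  · simp only [hq_zero x hx, zero_smul]
  · simp only [hq_one, one_smul]
  · calc ‖q.eval z • b‖ = ‖q.eval z‖ * ‖b‖ := norm_smul _ _
      _ ≤ ε / (‖b‖ + 1) * (‖b‖ + 1) := by
          gcongr
          · exact hq_le z hz
          · exact (lt_add_one _).le
      _ = ε := div_mul_cancel₀ _ (by positivity)

theorem exists_interpolating_corrections {p : ℕ → ℂ} (hp_inj : p.Injective)
    {r ε : ℕ → ℝ} (hr : ∀ n, r n < ‖p n‖) (hε : ∀ n, 0 < ε n) (a : ℕ → E) :
    ∃ g : ℕ → ℂ → E, (∀ n, Differentiable ℂ (g n)) ∧ (∀ n, ∀ i < n, g n (p i) = 0) ∧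
      (∀ n, ∑ i ∈ Finset.range (n + 1), g i (p n) = a n) ∧
      ∀ n, ∀ z ∈ closedBall 0 (r n), ‖g n z‖ ≤ ε n := by
  have hp_notMem (n : ℕ) : p n ∉ (Finset.range n).image p := by
    simp [hp_inj.eq_iff]
  choose G hG_diff hG_zero hG_val hG_le using fun n (b : E) ↦
    exists_differentiable_eq_norm_le (hp_notMem n) (hr n) (hε n) b
  let S : ℕ → ℂ → E := Nat.rec 0 fun n f ↦ f + G n (a n - f (p n))
  let g (n : ℕ) : ℂ → E := G n (a n - S n (p n))
  have hS (n : ℕ) : ∑ i ∈ Finset.range n, g i = S n :=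
    Finset.sum_range_induction g S rfl n fun _ _ ↦ rfl
  refine ⟨g, fun n ↦ hG_diff n _, fun n i hi ↦ ?_, fun n ↦ ?_, fun n ↦ hG_le n _⟩
  · exact hG_zero n _ _ (Finset.mem_image_of_mem p (Finset.mem_range.2 hi))
  · calc ∑ i ∈ Finset.range (n + 1), g i (p n) = S n (p n) + g n (p n) := by
          rw [Finset.sum_range_succ, ← hS, Finset.sum_apply]
      _ = a n := by simp only [g, hG_val, add_sub_cancel]

variable [CompleteSpace E]

theorem differentiableOn_tsum_of_cofinite_norm_le {ι : Type*} {g : ι → ℂ → E} {u : ι → ℝ}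
    {U : Set ℂ} (hu : Summable u) (hg : ∀ i, DifferentiableOn ℂ (g i) U) (hU : IsOpen U)
    (hg_le : ∀ᶠ i in cofinite, ∀ z ∈ U, ‖g i z‖ ≤ u i) :
    DifferentiableOn ℂ (fun z ↦ ∑' i, g i z) U :=
  have h_lim := (tendstoUniformlyOn_tsum_of_cofinite_eventually hu hg_le).tendstoLocallyUniformlyOn
  h_lim.differentiableOn (.of_forall fun _ ↦ .fun_sum fun i _ ↦ hg i) hU

theorem differentiable_tsum_of_norm_le_of_tendsto_atTop {g : ℕ → ℂ → E} {u r : ℕ → ℝ}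
    (hu : Summable u) (hr : Tendsto r atTop atTop) (hg : ∀ n, Differentiable ℂ (g n))
    (hg_le : ∀ n, ∀ z ∈ closedBall 0 (r n), ‖g n z‖ ≤ u n) :
    Differentiable ℂ fun z ↦ ∑' n, g n z := by
  intro z
  refine (differentiableOn_tsum_of_cofinite_norm_le hu (fun n ↦ (hg n).differentiableOn)
    (isOpen_ball (x := (0 : ℂ)) (ε := ‖z‖ + 1)) ?_).differentiableAt
      (isOpen_ball.mem_nhds (by simp))
  rw [Nat.cofinite_eq_atTop]
  filter_upwards [hr.eventually_ge_atTop (‖z‖ + 1)] with n hn w hw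
  exact hg_le n w (ball_subset_closedBall (ball_subset_ball hn hw))

theorem exists_differentiable_interpolating {p : ℕ → ℂ} (hp_inj : p.Injective)
    (hp : Tendsto p atTop (Bornology.cobounded ℂ)) (a : ℕ → E) :
    ∃ f : ℂ → E, Differentiable ℂ f ∧ ∀ n, f (p n) = a n := by
  obtain ⟨g, hg_diff, hg_zero, hg_sum, hg_le⟩ := exists_interpolating_corrections hp_inj
    (fun n ↦ sub_one_lt ‖p n‖) (fun n ↦ show (0 : ℝ) < (1 / 2) ^ n by positivity) a
  have hr : Tendsto (fun n ↦ ‖p n‖ - 1) atTop atTop :=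
    tendsto_atTop_add_const_right _ (-1) (tendsto_norm_atTop_iff_cobounded.2 hp)
  refine ⟨fun z ↦ ∑' n, g n z, differentiable_tsum_of_norm_le_of_tendsto_atTop
    summable_geometric_two hr hg_diff hg_le, fun n ↦ ?_⟩
  have hg_later (i : ℕ) (hi : i ∉ Finset.range (n + 1)) : g i (p n) = 0 :=
    hg_zero i n (not_le.1 (mt Finset.mem_range_succ_iff.2 hi))
  exact (tsum_eq_sum hg_later).trans (hg_sum n)

end Interpolation

theorem exists_analytically_nondegenerate_curve_general (E : Type*) [NormedAddCommGroup E]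
    [NormedSpace ℂ E] [CompleteSpace E] [TopologicalSpace.SeparableSpace E] :
    ∃ φ : ℂ → E, Differentiable ℂ φ ∧ DenseRange φ := by
  obtain ⟨φ, hφ, hφ_val⟩ := exists_differentiable_interpolating Nat.cast_injective
    tendsto_natCast_atTop_cobounded (TopologicalSpace.denseSeq E)
  refine ⟨φ, hφ, (TopologicalSpace.denseRange_denseSeq E).mono ?_⟩
  rintro _ ⟨n, rfl⟩
  exact ⟨n, hφ_val n⟩

/-- For every `m ≥ 1` there exists a holomorphic map `φ : ℂ → ℂ^m` such that
every entire function `h : ℂ^m → ℂ` vanishing identically on `φ(ℂ)` is identically zero. -/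
theorem exists_analytically_nondegenerate_curve (m : ℕ) (hm : 1 ≤ m) :
    ∃ φ : ℂ → (Fin m → ℂ), Differentiable ℂ φ ∧
      ∀ h : (Fin m → ℂ) → ℂ, Differentiable ℂ h →
        (∀ z : ℂ, h (φ z) = 0) → ∀ w : Fin m → ℂ, h w = 0 := by
  obtain ⟨φ, hφ, hφ_dense⟩ := exists_analytically_nondegenerate_curve_general (Fin m → ℂ)
  exact ⟨φ, hφ, fun h hh hφ_zero ↦
    congrFun (hφ_dense.equalizer hh.continuous continuous_const (funext hφ_zero))⟩
end

section
/- Let m ≥ 1 and let α₁, …, α_m be positive real numbers that are linearly independent over ℚ. Define φ : ℂ → ℂ^m by φ(z) = (exp(i·α₁·z), …, exp(i·α_m·z)). Then every entire function h : ℂ^m → ℂ that vanishes identically on the image φ(ℂ) is identically zero on ℂ^m. -/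
/-!
Reparametrize the real part of the curve as `t ↦ t α mod ℤᵐ` in the torus `(ℝ/ℤ)ᵐ`. Its image is a
subgroup, and by linear independence no nontrivial character of the torus is trivial on it. Hence it
is dense (Kronecker): the Haar measure of its closure has the same Fourier coefficients as the Haar
measure of the torus, so the two measures agree and the closure has full measure. By continuity an
entire function vanishing on the curve vanishes on the whole unit torus of `ℂᵐ`, and then on `ℂᵐ`,
by the one-variable identity theorem applied to one coordinate at a time.
-/

open MeasureTheory Topology Filter UnitAddTorus

section IdentityTheorem

variable {ι E : Type*} [Finite ι] [NormedAddCommGroup E] [NormedSpace ℂ E] [CompleteSpace E]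
  {f : (ι → ℂ) → E}

theorem apply_update_eq_zero_of_accPt [DecidableEq ι] (hf : Differentiable ℂ f) (w : ι → ℂ) (i : ι)
    {S : Set ℂ} {a : ℂ} (ha : AccPt a (𝓟 S)) (hS : ∀ z ∈ S, f (Function.update w i z) = 0) (z : ℂ) :
    f (Function.update w i z) = 0 := by
  have := Fintype.ofFinite ι
  have hslice : Differentiable ℂ fun z => f (Function.update w i z) :=
    hf.comp fun z => (hasFDerivAt_update w z).differentiableAt
  have hfreq : ∃ᶠ z in 𝓝[≠] a, f (Function.update w i z) = 0 :=
    (accPt_iff_frequently_nhdsNE.1 ha).mono hS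
  exact congrFun (AnalyticOnNhd.eq_of_frequently_eq (fun z _ => hslice.analyticAt z)
    (analyticOnNhd_const (v := (0 : E))) hfreq) z

theorem eq_zero_of_forall_mem_pi_of_accPt (hf : Differentiable ℂ f) {S : ι → Set ℂ} {a : ι → ℂ}
    (ha : ∀ i, AccPt (a i) (𝓟 (S i))) (hS : ∀ w ∈ Set.univ.pi S, f w = 0) : f = 0 := by
  classical
  have := Fintype.ofFinite ι
  suffices hpartial : ∀ (s : Finset ι) (w : ι → ℂ), (∀ i ∉ s, w i ∈ S i) → f w = 0 from
    funext fun w => hpartial Finset.univ w fun i hi => absurd (Finset.mem_univ i) hi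
  intro s
  induction s using Finset.induction_on with
  | empty => exact fun w hw => hS w fun i _ => hw i (Finset.notMem_empty i)
  | insert i s _ ih =>
    intro w hw
    rw [← Function.update_eq_self i w]
    refine apply_update_eq_zero_of_accPt hf w i (ha i) (fun z hz => ih _ fun j hj => ?_) (w i)
    obtain rfl | hji := eq_or_ne j i
    · simpa only [Function.update_self] using hz
    · rw [Function.update_of_ne hji]
      exact hw j (by simp only [Finset.mem_insert, hji, hj, or_self, not_false_eq_true])

theorem accPt_one_unitSphere : AccPt (1 : ℂ) (𝓟 (Metric.sphere 0 1)) := by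
  have hsphere : IsPreconnected (Metric.sphere (0 : ℂ) 1) :=
    isPreconnected_sphere (by simp [Complex.rank_real_complex]) 0 1
  have hnontrivial : (Metric.sphere (0 : ℂ) 1).Nontrivial :=
    ⟨1, by simp, -1, by simp, by norm_num⟩
  exact hsphere.preperfect_of_nontrivial hnontrivial 1 (by simp)

theorem eq_zero_of_forall_norm_eq_one (hf : Differentiable ℂ f)
    (hS : ∀ w : ι → ℂ, (∀ i, ‖w i‖ = 1) → f w = 0) : f = 0 :=
  eq_zero_of_forall_mem_pi_of_accPt hf (fun _ => accPt_one_unitSphere) fun w hw =>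
    hS w fun i => mem_sphere_zero_iff_norm.1 (hw i (Set.mem_univ i))

end IdentityTheorem

section Integration

theorem integral_eq_zero_of_add_left_eq_smul {G E : Type*} [AddGroup G] [MeasurableSpace G]
    [MeasurableAdd G] {μ : Measure G} [μ.IsAddLeftInvariant] [NormedAddCommGroup E]
    [NormedSpace ℂ E] {f : G → E} {x : G} {c : ℂ} (hc : c ≠ 1) (hf : ∀ y, f (x + y) = c • f y) :
    ∫ y, f y ∂μ = 0 := by
  have hinv : c • ∫ y, f y ∂μ = ∫ y, f y ∂μ := by
    rw [← integral_smul, ← integral_add_left_eq_self f x]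
    simp only [hf]
  have hdiff : (c - 1) • ∫ y, f y ∂μ = 0 := by rw [sub_smul, one_smul, hinv, sub_self]
  exact (smul_eq_zero.1 hdiff).resolve_left (sub_ne_zero.2 hc)

theorem isProbabilityMeasure_addHaarMeasure_top (G : Type*) [AddGroup G] [TopologicalSpace G]
    [IsTopologicalAddGroup G] [CompactSpace G] [MeasurableSpace G] [BorelSpace G] :
    IsProbabilityMeasure (Measure.addHaarMeasure (⊤ : TopologicalSpace.PositiveCompacts G)) :=
  ⟨Measure.addHaarMeasure_self⟩

theorem integral_eq_of_mem_span {X : Type*} [TopologicalSpace X] [CompactSpace X]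
    [MeasurableSpace X] [OpensMeasurableSpace X] {μ ν : Measure X} [IsFiniteMeasure μ]
    [IsFiniteMeasure ν] {s : Set C(X, ℂ)} (hs : ∀ g ∈ s, ∫ x, g x ∂μ = ∫ x, g x ∂ν)
    {g : C(X, ℂ)} (hg : g ∈ Submodule.span ℂ s) : ∫ x, g x ∂μ = ∫ x, g x ∂ν := by
  have hint (g : C(X, ℂ)) (ρ : Measure X) [IsFiniteMeasure ρ] : Integrable g ρ :=
    g.continuous.integrable_of_hasCompactSupport (.of_compactSpace g)
  induction hg using Submodule.span_induction with
  | mem g hg => exact hs g hg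
  | zero => simp
  | add f g _ _ hf hg =>
    simp only [ContinuousMap.add_apply]
    rw [integral_add (hint f μ) (hint g μ), integral_add (hint f ν) (hint g ν), hf, hg]
  | smul c g _ hg =>
    simp only [ContinuousMap.smul_apply]
    rw [integral_smul, integral_smul, hg]

end Integration

section Torus

theorem exists_toCircle_eq_of_norm_eq_one {T : ℝ} (hT : T ≠ 0) {w : ℂ} (hw : ‖w‖ = 1) :
    ∃ x : AddCircle T, (x.toCircle : ℂ) = w := by
  obtain ⟨x, hx⟩ := (AddCircle.homeomorphCircle hT).surjective
    ⟨w, mem_sphere_zero_iff_norm.2 hw⟩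
  exact ⟨x, by rw [← AddCircle.homeomorphCircle_apply hT, hx]⟩

variable {ι : Type*}

section Characters

variable [Fintype ι]

theorem mFourier_apply_add (n : ι → ℤ) (x y : UnitAddTorus ι) :
    mFourier n (x + y) = mFourier n x * mFourier n y := by
  simp only [mFourier, ContinuousMap.coe_mk, Pi.add_apply, fourier_apply, smul_add,
    AddCircle.toCircle_add, Circle.coe_mul, Finset.prod_mul_distrib]

open BoundedContinuousFunction in
theorem measure_ext_of_integral_mFourier_eq {μ ν : Measure (UnitAddTorus ι)} [IsFiniteMeasure μ]
    [IsFiniteMeasure ν] (h : ∀ n, ∫ x, mFourier n x ∂μ = ∫ x, mFourier n x ∂ν) : μ = ν := by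
  refine ext_of_forall_mem_subalgebra_integral_eq_of_polish
    (A := (mFourierSubalgebra ι).comap (toContinuousMapStarₐ ℂ)) ?_ fun g hg => ?_
  · intro x y hxy
    obtain ⟨_, ⟨g, hg, rfl⟩, hgxy⟩ := mFourierSubalgebra_separatesPoints hxy
    exact ⟨g, ⟨g, ⟨mkOfCompact g, hg, rfl⟩, rfl⟩, hgxy⟩
  · refine integral_eq_of_mem_span (s := Set.range mFourier) (Set.forall_mem_range.2 h)
      (g := g.toContinuousMap) ?_
    rw [← mFourierSubalgebra_coe]
    exact hg

theorem dense_of_forall_exists_mFourier_ne_one (H : AddSubgroup (UnitAddTorus ι))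
    (hH : ∀ n : ι → ℤ, n ≠ 0 → ∃ x ∈ H, mFourier n x ≠ 1) :
    Dense (H : Set (UnitAddTorus ι)) := by
  let K := H.topologicalClosure
  have hKclosed : IsClosed (K : Set (UnitAddTorus ι)) := H.isClosed_topologicalClosure
  have : CompactSpace K := isCompact_iff_compactSpace.1 hKclosed.isCompact
  let μ : Measure (UnitAddTorus ι) := Measure.addHaarMeasure ⊤
  let η : Measure K := Measure.addHaarMeasure ⊤
  have : IsProbabilityMeasure μ := isProbabilityMeasure_addHaarMeasure_top _
  have : IsProbabilityMeasure η := isProbabilityMeasure_addHaarMeasure_top _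
  have hemb : MeasurableEmbedding ((↑) : K → UnitAddTorus ι) :=
    .subtype_coe hKclosed.measurableSet
  have : IsProbabilityMeasure (η.map Subtype.val) :=
    Measure.isProbabilityMeasure_map hemb.measurable.aemeasurable
  have hη : η.map Subtype.val = μ := by
    refine measure_ext_of_integral_mFourier_eq fun n => ?_
    obtain rfl | hn := eq_or_ne n 0
    · simp only [mFourier_zero, ContinuousMap.one_apply, integral_const, probReal_univ]
    obtain ⟨x, hxH, hx⟩ := hH n hn
    rw [hemb.integral_map,
      integral_eq_zero_of_add_left_eq_smul (x := (⟨x, H.le_topologicalClosure hxH⟩ : K)) hx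
        fun y => mFourier_apply_add n x y,
      integral_eq_zero_of_add_left_eq_smul hx (mFourier_apply_add n x)]
  have hμK : μ K = 1 := by
    rw [← hη, hemb.map_apply, Subtype.coe_preimage_self, measure_univ]
  rw [dense_iff_closure_eq, ← H.topologicalClosure_coe]
  exact hKclosed.measure_eq_one_iff_eq_univ.1 hμK

end Characters

/-- The one-parameter subgroup `t ↦ (t αᵢ mod 1)ᵢ` of the torus with direction `α`. -/
def linearFlow (α : ι → ℝ) : ℝ →+ UnitAddTorus ι where
  toFun t i := (t * α i : ℝ)
  map_zero' := by ext i; simp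
  map_add' s t := by ext i; simp [add_mul]

theorem mFourier_linearFlow [Fintype ι] (α : ι → ℝ) (n : ι → ℤ) (t : ℝ) :
    mFourier n (linearFlow α t) = Complex.exp (2 * Real.pi * Complex.I * (t * ∑ i, n i * α i)) := by
  simp only [mFourier, ContinuousMap.coe_mk, linearFlow, AddMonoidHom.coe_mk, ZeroHom.coe_mk,
    fourier_coe_apply, ← Complex.exp_sum]
  push_cast
  simp only [Finset.mul_sum]
  congr! 2 with i
  ring

theorem denseRange_linearFlow [Finite ι] {α : ι → ℝ} (hα : LinearIndependent ℚ α) :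
    DenseRange (linearFlow α) := by
  have := Fintype.ofFinite ι
  rw [DenseRange, ← AddMonoidHom.coe_range]
  refine dense_of_forall_exists_mFourier_ne_one _ fun n hn => ?_
  have hfreq : ∑ i, n i * α i ≠ 0 := by
    contrapose! hn
    have hcoeff : ∀ i, (n i : ℚ) = 0 :=
      Fintype.linearIndependent_iff.1 hα _ (by simpa [Rat.smul_def] using hn)
    exact funext fun i => mod_cast hcoeff i
  -- At time `1 / (2ℓ)`, where `ℓ = ∑ nᵢ αᵢ`, the character takes the value `exp (π i) = -1`.
  refine ⟨_, ⟨(2 * ∑ i, n i * α i)⁻¹, rfl⟩, ?_⟩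
  have hexp : 2 * Real.pi * Complex.I * (((2 * ∑ i, n i * α i : ℝ)⁻¹ : ℝ) * ∑ i, n i * α i)
      = Real.pi * Complex.I := by
    have : (∑ i, n i * α i : ℂ) ≠ 0 := mod_cast hfreq
    push_cast
    field_simp
  rw [mFourier_linearFlow, hexp, Complex.exp_pi_mul_I]
  norm_num

end Torus

theorem exp_curve_analytically_nondegenerate_general {ι E : Type*} [Finite ι]
    [NormedAddCommGroup E] [NormedSpace ℂ E] [CompleteSpace E] {α : ι → ℝ}
    (hα : LinearIndependent ℚ α) {h : (ι → ℂ) → E} (hh : Differentiable ℂ h)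
    (hvan : ∀ t : ℝ, h (fun j => Complex.exp (Complex.I * α j * t)) = 0) : h = 0 := by
  let e : UnitAddTorus ι → ι → ℂ := fun x j => (x j).toCircle
  have he : Continuous e := by fun_prop
  have hflow (t : ℝ) : h (e (linearFlow α t)) = 0 := by
    rw [← hvan (2 * Real.pi * t)]
    congr! 2 with j
    simp only [e, linearFlow, AddMonoidHom.coe_mk, ZeroHom.coe_mk, AddCircle.toCircle_apply_mk,
      Circle.coe_exp]
    push_cast
    ring_nf
  have htorus : h ∘ e = 0 :=
    (denseRange_linearFlow hα).equalizer (hh.continuous.comp he) continuous_const (funext hflow)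
  refine eq_zero_of_forall_norm_eq_one hh fun w hw => ?_
  choose x hx using fun j => exists_toCircle_eq_of_norm_eq_one one_ne_zero (hw j)
  rw [← funext hx]
  exact congrFun htorus x

/-- For `m ≥ 1` and positive reals `α₁,…,α_m` linearly independent over `ℚ`,
every entire function `h : ℂ^m → ℂ` vanishing identically on the image of
`φ(z) = (exp(i·α₁·z), …, exp(i·α_m·z))` is identically zero. -/
theorem exp_curve_analytically_nondegenerate (m : ℕ) (hm : 1 ≤ m) (α : Fin m → ℝ)
    (hpos : ∀ j, 0 < α j) (hind : LinearIndependent ℚ α)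
    (h : (Fin m → ℂ) → ℂ) (hh : Differentiable ℂ h)
    (hvan : ∀ z : ℂ, h (fun j : Fin m => Complex.exp (Complex.I * (α j) * z)) = 0) :
    ∀ w : Fin m → ℂ, h w = 0 := by
  intro w
  exact congrFun (exp_curve_analytically_nondegenerate_general hind hh fun t => hvan t) w
end

section
/- Let m ≥ 1 and let p ∈ ℂ^m. Then there exists a holomorphic map f from the open unit disk Δ = {z ∈ ℂ : |z| < 1} to ℂ^m such that f(0) = p and every entire function h : ℂ^m → ℂ that vanishes identically on f(Δ) is identically zero on ℂ^m. In particular, f(Δ) is Zariski dense in ℂ^m: every polynomial in m variables vanishing on f(Δ) is the zero polynomial. -/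
/-!
The disk is the restriction of an entire map whose range is already dense. Let `L n` be the entire
function equal to `1` at `n` and to `0` at every other natural number, a multiple of
`sin (π z) / (z - n)`. Then `∑ n, ((z + 1) / (n + 1)) ^ N n • L n z • a n` takes the value `a k` at
every natural number `k`, and it converges locally uniformly once the exponents `N n` are large,
because the factor `(z + 1) / (n + 1)` is small for large `n`. Let `f` be such a sum, with `a 0 = p`
and with `a 1, a 2, …` dense. If an entire function `h` vanishes on `f(Δ)`, then `h ∘ f` vanishes
on `ℂ` by the identity theorem, hence `h` vanishes on a dense set, hence everywhere.
-/

open Filter Metric Set TopologicalSpace Topology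

section PowerDamping

variable {E : Type*} [NormedAddCommGroup E]

theorem exists_forall_norm_pow_smul_le {X 𝕜 : Type*} [TopologicalSpace X] [NormedField 𝕜]
    [NormedSpace 𝕜 E] {K : Set X} (hK : IsCompact K) {g : X → E} (hg : ContinuousOn g K)
    {w : X → 𝕜} {r : ℝ} (hr : r < 1) (hw : ∀ x ∈ K, ‖w x‖ ≤ r) {ε : ℝ} (hε : 0 < ε) :
    ∃ N : ℕ, ∀ x ∈ K, ‖w x ^ N • g x‖ ≤ ε := by
  obtain rfl | ⟨x₀, hx₀⟩ := K.eq_empty_or_nonempty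
  · simp
  obtain ⟨M, hM⟩ := hK.exists_bound_of_continuousOn hg
  have hr₀ : 0 ≤ r := (norm_nonneg _).trans (hw x₀ hx₀)
  have hlim : Tendsto (fun N : ℕ => r ^ N * M) atTop (𝓝 0) := by
    simpa using (tendsto_pow_atTop_nhds_zero_of_lt_one hr₀ hr).mul_const M
  obtain ⟨N, hN⟩ := (hlim.eventually_le_const hε).exists
  refine ⟨N, fun x hx => ?_⟩
  calc ‖w x ^ N • g x‖ = ‖w x‖ ^ N * ‖g x‖ := by rw [norm_smul, norm_pow]
    _ ≤ r ^ N * M := by gcongr; exacts [hw x hx, hM x hx]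
    _ ≤ ε := hN

theorem norm_add_one_div_natCast_add_one_le_half {n : ℕ} {z : ℂ}
    (hz : z ∈ closedBall (-1) ((n + 1 : ℝ) / 2)) : ‖(z + 1) / (n + 1)‖ ≤ 1 / 2 := by
  have hn : ‖(n + 1 : ℂ)‖ = n + 1 := by exact_mod_cast Complex.norm_natCast (n + 1)
  rw [mem_closedBall_iff_norm, sub_neg_eq_add] at hz
  rw [norm_div, hn, div_le_iff₀ (by positivity)]
  linarith

theorem exists_summableLocallyUniformlyOn_pow_smul [NormedSpace ℂ E] [CompleteSpace E]
    {g : ℕ → ℂ → E} (hg : ∀ n, Continuous (g n)) :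
    ∃ N : ℕ → ℕ, SummableLocallyUniformlyOn
      (fun (n : ℕ) (z : ℂ) => ((z + 1) / (n + 1)) ^ N n • g n z) univ := by
  choose N hN using fun n : ℕ => exists_forall_norm_pow_smul_le
    (isCompact_closedBall (-1 : ℂ) ((n + 1 : ℝ) / 2)) (hg n).continuousOn one_half_lt_one
    (fun _ => norm_add_one_div_natCast_add_one_le_half)
    (pow_pos (one_half_pos (α := ℝ)) n)
  refine ⟨N, .of_locally_bounded_eventually isOpen_univ fun K _ hK =>
    ⟨fun n => (1 / 2 : ℝ) ^ n, summable_geometric_two, ?_⟩⟩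
  obtain ⟨R, hR⟩ := hK.isBounded.subset_closedBall (-1 : ℂ)
  rw [Nat.cofinite_eq_atTop]
  filter_upwards [eventually_ge_atTop ⌈2 * R⌉₊] with n hn z hz
  have hRn : R ≤ (n + 1 : ℝ) / 2 := by linarith [Nat.ceil_le.mp hn]
  exact hN n z (closedBall_subset_closedBall hRn (hR hz))

end PowerDamping

section Interpolation

theorem exists_differentiable_forall_natCast_eq_single (n : ℕ) :
    ∃ L : ℂ → ℂ, Differentiable ℂ L ∧ ∀ k : ℕ, L k = Pi.single (M := fun _ => ℂ) n 1 k := by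
  let S : ℂ → ℂ := fun z => Complex.sin (z * Real.pi)
  have hS : Differentiable ℂ S := by fun_prop
  have hSk (k : ℕ) : S k = 0 := Complex.sin_nat_mul_pi k
  have hS' : deriv S n ≠ 0 := by
    have hderiv : HasDerivAt S (Complex.cos (n * Real.pi) * Real.pi) n := by
      simpa using ((hasDerivAt_id (n : ℂ)).mul_const (Real.pi : ℂ)).csin
    have hcos : Complex.cos (n * Real.pi) ≠ 0 := fun hcos => by
      simpa [hcos, Complex.sin_nat_mul_pi] using Complex.sin_sq_add_cos_sq (n * Real.pi)
    rw [hderiv.deriv]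
    exact mul_ne_zero hcos (Complex.ofReal_ne_zero.mpr Real.pi_ne_zero)
  refine ⟨fun z => (deriv S n)⁻¹ * dslope S n z, ?_, fun k => ?_⟩
  · refine .const_mul (differentiableOn_univ.mp ?_) _
    exact (Complex.differentiableOn_dslope univ_mem).mpr hS.differentiableOn
  · obtain rfl | hkn := eq_or_ne k n
    · dsimp only
      rw [dslope_same, inv_mul_cancel₀ hS', Pi.single_eq_same]
    · dsimp only
      rw [dslope_of_ne S (Nat.cast_injective.ne hkn), slope_def_field, hSk, hSk, sub_zero,
        zero_div, mul_zero, Pi.single_eq_of_ne hkn]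

variable {E : Type*} [NormedAddCommGroup E] [NormedSpace ℂ E] [CompleteSpace E]

theorem exists_differentiable_forall_natCast_eq (a : ℕ → E) :
    ∃ f : ℂ → E, Differentiable ℂ f ∧ ∀ k : ℕ, f k = a k := by
  choose L hL hLk using exists_differentiable_forall_natCast_eq_single
  obtain ⟨N, hN⟩ := exists_summableLocallyUniformlyOn_pow_smul (g := fun n z => L n z • a n)
    fun n => (hL n).continuous.smul continuous_const
  refine ⟨fun z => ∑' n : ℕ, ((z + 1) / (n + 1) : ℂ) ^ N n • L n z • a n, ?_, fun k => ?_⟩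
  · refine differentiableOn_univ.mp (hN.differentiableOn isOpen_univ fun n z _ => ?_)
    have := hL n
    fun_prop
  · have hk : (k + 1 : ℂ) ≠ 0 := Nat.cast_add_one_ne_zero k
    dsimp only
    rw [tsum_eq_single k fun n hn => by rw [hLk, Pi.single_eq_of_ne hn.symm, zero_smul, smul_zero],
      hLk, Pi.single_eq_same, div_self hk, one_pow, one_smul, one_smul]

theorem exists_differentiable_denseRange [SeparableSpace E] (p : E) :
    ∃ f : ℂ → E, Differentiable ℂ f ∧ f 0 = p ∧ DenseRange f := by
  obtain ⟨f, hf, hfa⟩ := exists_differentiable_forall_natCast_eq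
    (fun | 0 => p | n + 1 => denseSeq E n)
  refine ⟨f, hf, by simpa using hfa 0, (denseRange_denseSeq E).mono ?_⟩
  rintro _ ⟨n, rfl⟩
  exact ⟨(n + 1 : ℕ), hfa (n + 1)⟩

end Interpolation

theorem eq_zero_of_denseRange_of_eventually_comp_eq_zero {E F : Type*} [NormedAddCommGroup E]
    [NormedSpace ℂ E] [NormedAddCommGroup F] [NormedSpace ℂ F] [CompleteSpace F] {f : ℂ → E}
    (hf : Differentiable ℂ f) (hdense : DenseRange f) {h : E → F} (hh : Differentiable ℂ h)
    {z₀ : ℂ} (hz₀ : ∀ᶠ z in 𝓝 z₀, h (f z) = 0) : h = 0 := by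
  have hcomp : AnalyticOnNhd ℂ (h ∘ f) univ :=
    (hh.comp hf).differentiableOn.analyticOnNhd isOpen_univ
  have hzero : h ∘ f = 0 := hcomp.eq_of_eventuallyEq analyticOnNhd_const hz₀
  exact hdense.equalizer hh.continuous continuous_zero hzero

theorem differentiable_mvPolynomial_eval {𝕜 σ : Type*} [NontriviallyNormedField 𝕜] [Finite σ]
    (P : MvPolynomial σ 𝕜) : Differentiable 𝕜 fun w : σ → 𝕜 => MvPolynomial.eval w P := by
  cases nonempty_fintype σ
  induction P using MvPolynomial.induction_on with
  | C c => simp only [MvPolynomial.eval_C, differentiable_const]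
  | add P Q hP hQ =>
    simp only [map_add]
    exact hP.fun_add hQ
  | mul_X P i hP =>
    simp only [map_mul, MvPolynomial.eval_X]
    exact hP.fun_mul (differentiable_apply i)

universe u v

theorem exists_nondegenerate_disk_through_point_general {E : Type u} [NormedAddCommGroup E]
    [NormedSpace ℂ E] [CompleteSpace E] [SeparableSpace E] (p : E) :
    ∃ f : ℂ → E, Differentiable ℂ f ∧ f 0 = p ∧
      ∀ {F : Type v} [NormedAddCommGroup F] [NormedSpace ℂ F] [CompleteSpace F] (h : E → F),
        Differentiable ℂ h → (∀ z ∈ ball (0 : ℂ) 1, h (f z) = 0) → ∀ w, h w = 0 := by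
  obtain ⟨f, hf, hf₀, hdense⟩ := exists_differentiable_denseRange p
  refine ⟨f, hf, hf₀, fun h hh hz => congrFun ?_⟩
  exact eq_zero_of_denseRange_of_eventually_comp_eq_zero hf hdense hh
    (eventually_of_mem (ball_mem_nhds 0 one_pos) hz)

/-- For `m ≥ 1` and any `p ∈ ℂ^m` there is a holomorphic map `f` from the open
unit disk `Δ` to `ℂ^m` with `f 0 = p` such that every entire function vanishing on `f(Δ)` is
identically zero; in particular every polynomial vanishing on `f(Δ)` is the zero polynomial. -/
theorem exists_nondegenerate_disk_through_point (m : ℕ) (hm : 1 ≤ m) (p : Fin m → ℂ) :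
    ∃ f : ℂ → (Fin m → ℂ), DifferentiableOn ℂ f (Metric.ball (0 : ℂ) 1) ∧ f 0 = p ∧
      (∀ h : (Fin m → ℂ) → ℂ, Differentiable ℂ h →
        (∀ z ∈ Metric.ball (0 : ℂ) 1, h (f z) = 0) → ∀ w : Fin m → ℂ, h w = 0) ∧
      (∀ P : MvPolynomial (Fin m) ℂ,
        (∀ z ∈ Metric.ball (0 : ℂ) 1, MvPolynomial.eval (f z) P = 0) → P = 0) := by
  obtain ⟨f, hf, hf₀, hzero⟩ := exists_nondegenerate_disk_through_point_general p
  exact ⟨f, hf.differentiableOn, hf₀, hzero, fun P hP =>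
    MvPolynomial.funext (by simpa using hzero _ (differentiable_mvPolynomial_eval P) hP)⟩
end

section
/- Let P ∈ ℂ[z] be a nonconstant polynomial and let k ≥ 1. For a polynomial R in k+1 variables w, y₁, …, y_k with complex coefficients, the following are equivalent: (a) R(exp(P(z)), P'(z), P''(z), …, P^{(k)}(z)) = 0 for all z ∈ ℂ; (b) R(w, P'(z), P''(z), …, P^{(k)}(z)) = 0 for all w ∈ ℂ and all z ∈ ℂ. (Equivalently: for the finite-order entire curve f = exp∘P into ℂ* with k-jet lift z ↦ (f(z); P'(z), …, P^{(k)}(z)), the Zariski closure X_k of the jet lift image in ℂ* × ℂ^k is the product ℂ* × W_k, where W_k is the Zariski closure of {(P'(z), …, P^{(k)}(z)) : z ∈ ℂ} in ℂ^k.) -/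
/-!
For fixed `w ≠ 0` the polynomial `P` attains each of the infinitely many logarithms of `w`, so
`z ↦ exp (P z)` takes the value `w` infinitely often. Hence a relation `F(z, exp (P z)) = 0` with
`F ∈ ℂ[X][Y]` forces the polynomial `F(·, w)` to vanish for every `w ≠ 0`, and then `F = 0`.
Substituting polynomials in `z` for `y₁, …, y_k` turns `R` into such an `F`.
-/

open Polynomial
open scoped Polynomial.Bivariate

section Domain

variable {A : Type*} [CommRing A] [IsDomain A]

theorem eval_C_eq_zero_of_evalEval_eq_zero_of_infinite_fiber {f : A → A} {F : A[X][Y]}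
    (hF : ∀ z, F.evalEval z (f z) = 0) {w : A} (hw : (f ⁻¹' {w}).Infinite) :
    F.eval (C w) = 0 := by
  refine eq_zero_of_infinite_isRoot _ (hw.mono ?_)
  rintro z rfl
  exact hF z

theorem eq_zero_of_evalEval_eq_zero_of_infinite_setOf_infinite_fiber {f : A → A}
    (hf : {w | (f ⁻¹' {w}).Infinite}.Infinite) {F : A[X][Y]}
    (hF : ∀ z, F.evalEval z (f z) = 0) : F = 0 := by
  refine eq_zero_of_infinite_isRoot F ((hf.image C_injective.injOn).mono ?_)
  rintro _ ⟨w, hw, rfl⟩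
  exact eval_C_eq_zero_of_evalEval_eq_zero_of_infinite_fiber hF hw

end Domain

section Substitution

variable {A : Type*} [CommSemiring A] {n : ℕ}

/-- The bivariate polynomial `R(Y, Q₁(X), …, Qₙ(X))`: the zeroth variable of `R` becomes the outer
variable `Y`, and the remaining ones are replaced by polynomials in the inner variable `X`. -/
noncomputable def substTail (Q : Fin n → A[X]) (R : MvPolynomial (Fin (n + 1)) A) : A[X][Y] :=
  (MvPolynomial.finSuccEquiv A n R).map (MvPolynomial.aeval Q).toRingHom

theorem evalEval_substTail (Q : Fin n → A[X]) (R : MvPolynomial (Fin (n + 1)) A) (z w : A) :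
    (substTail Q R).evalEval z w =
      MvPolynomial.eval (Fin.cons w fun j => (Q j).eval z : Fin (n + 1) → A) R := by
  have eval_comp_aeval : (evalRingHom z).comp (MvPolynomial.aeval Q).toRingHom =
      MvPolynomial.eval fun j => (Q j).eval z := by
    ext <;> simp
  rw [substTail, ← map_evalRingHom_eval, Polynomial.map_map, eval_comp_aeval,
    MvPolynomial.eval_eq_eval_mv_eval']

end Substitution

theorem jet_closure_product_exp_poly_general {A : Type*} [CommRing A] [IsDomain A] {f : A → A}
    (hf : {w | (f ⁻¹' {w}).Infinite}.Infinite) {n : ℕ} (Q : Fin n → A[X])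
    (R : MvPolynomial (Fin (n + 1)) A) :
    (∀ z, MvPolynomial.eval (Fin.cons (f z) fun j => (Q j).eval z : Fin (n + 1) → A) R = 0) ↔
      ∀ w z, MvPolynomial.eval (Fin.cons w fun j => (Q j).eval z : Fin (n + 1) → A) R = 0 := by
  simp only [← evalEval_substTail]
  refine ⟨fun h w z => ?_, fun h z => h (f z) z⟩
  rw [eq_zero_of_evalEval_eq_zero_of_infinite_setOf_infinite_fiber hf h, evalEval_zero]

theorem infinite_fiber_cexp {w : ℂ} (hw : w ≠ 0) : (Complex.exp ⁻¹' {w}).Infinite := by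
  refine Set.infinite_of_injective_forall_mem
    (f := fun n : ℤ => Complex.log w + n * (2 * Real.pi * Complex.I)) ?_ fun n => ?_
  · exact (add_right_injective _).comp
      ((mul_left_injective₀ Complex.two_pi_I_ne_zero).comp Int.cast_injective)
  · exact (Complex.exp_periodic.int_mul n _).trans (Complex.exp_log hw)

theorem infinite_fiber_cexp_eval {P : ℂ[X]} (hP : P.natDegree ≠ 0) {w : ℂ}
    (hw : w ≠ 0) : ((fun z => Complex.exp (P.eval z)) ⁻¹' {w}).Infinite :=
  (infinite_fiber_cexp hw).preimage fun z _ => IsAlgClosed.eval_surjective hP z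

theorem infinite_setOf_infinite_fiber_cexp_eval {P : ℂ[X]} (hP : P.natDegree ≠ 0) :
    {w | ((fun z => Complex.exp (P.eval z)) ⁻¹' {w}).Infinite}.Infinite :=
  (Set.finite_singleton (0 : ℂ)).infinite_compl.mono fun _ hw =>
    infinite_fiber_cexp_eval hP hw

/-- Let `P` be a nonconstant polynomial and `k ≥ 1`. For a polynomial `R` in
variables `w, y₁, …, y_k`, the identity `R(exp(P z), P'(z), …, P^{(k)}(z)) = 0` for all `z`
holds iff `R(w, P'(z), …, P^{(k)}(z)) = 0` for all `w ∈ ℂ` and all `z ∈ ℂ`. -/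
theorem jet_closure_product_exp_poly (P : Polynomial ℂ) (hP : 0 < P.natDegree)
    (k : ℕ) (hk : 1 ≤ k) (R : MvPolynomial (Fin (k + 1)) ℂ) :
    (∀ z : ℂ, MvPolynomial.eval
        (Fin.cons (Complex.exp (P.eval z))
          (fun j : Fin k => ((Polynomial.derivative)^[(j : ℕ) + 1] P).eval z)) R = 0)
    ↔ (∀ w z : ℂ, MvPolynomial.eval
        (Fin.cons w
          (fun j : Fin k => ((Polynomial.derivative)^[(j : ℕ) + 1] P).eval z)) R = 0) :=
  jet_closure_product_exp_poly_general (infinite_setOf_infinite_fiber_cexp_eval hP.ne')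
    (fun j : Fin k => derivative^[(j : ℕ) + 1] P) R
end

section
/- Let n, m ≥ 1, let P₁, …, P_n ∈ ℂ[z] be polynomials such that for every nonzero integer tuple (k₁, …, k_n) ∈ ℤ^n the polynomial k₁P₁ + ⋯ + k_nP_n is nonconstant, and let Q₁, …, Q_m ∈ ℂ[z] be arbitrary polynomials. Then for every polynomial R in n+m variables w₁, …, w_n, y₁, …, y_m with complex coefficients, the following are equivalent: (a) R(exp(P₁(z)), …, exp(P_n(z)), Q₁(z), …, Q_m(z)) = 0 for all z ∈ ℂ; (b) R(w₁, …, w_n, Q₁(z), …, Q_m(z)) = 0 for all w ∈ ℂ^n and all z ∈ ℂ. (Equivalently: the Zariski closure of the curve z ↦ (exp(P₁(z)), …, exp(P_n(z)), Q₁(z), …, Q_m(z)) in (ℂ*)^n × ℂ^m is the product (ℂ*)^n × W, where W is the Zariski closure of {(Q₁(z), …, Q_m(z)) : z ∈ ℂ} in ℂ^m.) -/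
/-!
Consider a relation `∑ Aᵢ yᵢ = 0` with polynomial coefficients `Aᵢ`, where `yᵢ' = gᵢ yᵢ` with
distinct polynomials `gᵢ`, and fix an index `t`. The operator `d/dz - g_t` turns it into the
relation with coefficients `Aᵢ' + (gᵢ - g_t) Aᵢ`. On the coefficient of `y_t` this is plain
differentiation, so iterating removes that term; on the other coefficients it is injective, because
`Aᵢ'` has smaller degree than `(gᵢ - g_t) Aᵢ`. By induction on the number of terms all coefficients
vanish.

The monomials in `exp P₁, …, exp Pₙ` are such `yᵢ`, with `gᵢ` a combination of the `Pⱼ'`, and they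
have distinct `gᵢ` exactly when the `Pⱼ'` are `ℤ`-independent. So `exp P₁, …, exp Pₙ` are
algebraically independent over `ℂ[z]`, and a relation `R(exp P, Q) = 0` forces
`R(w, Q) = 0` in `ℂ[z][w]`.
-/

open Polynomial

section TwistedDerivative

variable {R : Type*}

/-- The operator `A ↦ A' + g A` on polynomials, that is, the derivative `d/dz` of `A y` read on the
coefficient `A` when `y' = g y`. -/
noncomputable def twistedDerivative [CommSemiring R] (g : R[X]) : R[X] →ₗ[R] R[X] :=
  derivative + LinearMap.mulLeft R g

lemma twistedDerivative_apply [CommSemiring R] (g A : R[X]) :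
    twistedDerivative g A = derivative A + g * A := rfl

lemma twistedDerivative_zero [CommSemiring R] : twistedDerivative (0 : R[X]) = derivative := by
  ext1; simp [twistedDerivative]

lemma twistedDerivative_injective [CommRing R] [NoZeroDivisors R] {g : R[X]} (hg : g ≠ 0) :
    Function.Injective (twistedDerivative g) := by
  refine (injective_iff_map_eq_zero _).2 fun A hA => ?_
  by_contra hA0
  have hdeg : (derivative A).degree < A.degree := degree_derivative_lt hA0
  have hderiv : derivative A = -(g * A) := eq_neg_of_add_eq_zero_left hA
  rw [hderiv, degree_neg, mul_comm] at hdeg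
  exact hdeg.not_ge (degree_le_mul_left A hg)

end TwistedDerivative

/-- `y` is a nowhere vanishing solution of `y' = g y`; the model case is `y = exp P` with
`g = P'`. -/
structure IsHyperexponential {𝕜 : Type*} [NontriviallyNormedField 𝕜] (g : 𝕜[X]) (y : 𝕜 → 𝕜) :
    Prop where
  ne_zero : ∀ z, y z ≠ 0
  hasDerivAt : ∀ z, HasDerivAt y (g.eval z * y z) z

lemma isHyperexponential_cexp (P : ℂ[X]) :
    IsHyperexponential (derivative P) fun z => Complex.exp (P.eval z) where
  ne_zero _ := Complex.exp_ne_zero _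
  hasDerivAt z := by simpa only [mul_comm] using (P.hasDerivAt z).cexp

namespace IsHyperexponential

variable {𝕜 ι : Type*} [NontriviallyNormedField 𝕜]

lemma one : IsHyperexponential (0 : 𝕜[X]) 1 where
  ne_zero _ := one_ne_zero
  hasDerivAt z := (hasDerivAt_const z (1 : 𝕜)).congr_deriv (by rw [eval_zero, zero_mul])

lemma mul {g h : 𝕜[X]} {x y : 𝕜 → 𝕜} (hx : IsHyperexponential g x)
    (hy : IsHyperexponential h y) : IsHyperexponential (g + h) (x * y) where
  ne_zero z := mul_ne_zero (hx.ne_zero z) (hy.ne_zero z)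
  hasDerivAt z := by
    refine ((hx.hasDerivAt z).mul (hy.hasDerivAt z)).congr_deriv ?_
    rw [eval_add, Pi.mul_apply]
    ring

lemma pow {g : 𝕜[X]} {y : 𝕜 → 𝕜} (hy : IsHyperexponential g y) (k : ℕ) :
    IsHyperexponential (k • g) (y ^ k) := by
  induction k with
  | zero => simpa using one
  | succ k ih => simpa only [succ_nsmul, pow_succ] using ih.mul hy

lemma prod {g : ι → 𝕜[X]} {y : ι → 𝕜 → 𝕜} {s : Finset ι}
    (hy : ∀ i ∈ s, IsHyperexponential (g i) (y i)) :
    IsHyperexponential (∑ i ∈ s, g i) (∏ i ∈ s, y i) := by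
  induction s using Finset.cons_induction with
  | empty => simpa using one
  | cons i s hi ih =>
    rw [Finset.forall_mem_cons] at hy
    simpa only [Finset.sum_cons, Finset.prod_cons] using hy.1.mul (ih hy.2)

lemma sum_twistedDerivative_eq_zero {g : ι → 𝕜[X]} {y : ι → 𝕜 → 𝕜} {s : Finset ι}
    (hy : ∀ i ∈ s, IsHyperexponential (g i) (y i)) (c : 𝕜[X]) {A : ι → 𝕜[X]}
    (hA : ∀ z, ∑ i ∈ s, (A i).eval z * y i z = 0) (z : 𝕜) :
    ∑ i ∈ s, (twistedDerivative (g i - c) (A i)).eval z * y i z = 0 := by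
  have hderiv : HasDerivAt (fun z => ∑ i ∈ s, (A i).eval z * y i z)
      (∑ i ∈ s, ((derivative (A i)).eval z * y i z + (A i).eval z * ((g i).eval z * y i z))) z :=
    .fun_sum fun i hi => ((A i).hasDerivAt z).mul ((hy i hi).hasDerivAt z)
  rw [funext hA] at hderiv
  calc ∑ i ∈ s, (twistedDerivative (g i - c) (A i)).eval z * y i z
      = ∑ i ∈ s, ((derivative (A i)).eval z * y i z + (A i).eval z * ((g i).eval z * y i z))
          - c.eval z * ∑ i ∈ s, (A i).eval z * y i z := by
        rw [Finset.mul_sum, ← Finset.sum_sub_distrib]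
        refine Finset.sum_congr rfl fun i _ => ?_
        rw [twistedDerivative_apply, eval_add, eval_mul, eval_sub]
        ring
    _ = 0 := by rw [hderiv.unique (hasDerivAt_const z 0), hA, mul_zero, sub_zero]

lemma sum_iterate_twistedDerivative_eq_zero {g : ι → 𝕜[X]} {y : ι → 𝕜 → 𝕜} {s : Finset ι}
    (hy : ∀ i ∈ s, IsHyperexponential (g i) (y i)) (c : 𝕜[X]) {A : ι → 𝕜[X]}
    (hA : ∀ z, ∑ i ∈ s, (A i).eval z * y i z = 0) (k : ℕ) (z : 𝕜) :
    ∑ i ∈ s, ((twistedDerivative (g i - c))^[k] (A i)).eval z * y i z = 0 := by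
  induction k generalizing z with
  | zero => exact hA z
  | succ k ih =>
    simpa only [Function.iterate_succ_apply'] using sum_twistedDerivative_eq_zero hy c ih z

theorem coeff_eq_zero_of_sum_eq_zero {g : ι → 𝕜[X]} {y : ι → 𝕜 → 𝕜} {s : Finset ι}
    (hy : ∀ i ∈ s, IsHyperexponential (g i) (y i)) (hg : Set.InjOn g s) {A : ι → 𝕜[X]}
    (hA : ∀ z, ∑ i ∈ s, (A i).eval z * y i z = 0) : ∀ i ∈ s, A i = 0 := by
  induction s using Finset.cons_induction generalizing A with
  | empty => simp
  | cons t s hts ih =>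
    have hA_tail : ∀ i ∈ s, A i = 0 := by
      intro i hi
      set k := (A t).natDegree + 1
      have ht : (twistedDerivative (g t - g t))^[k] (A t) = 0 := by
        rw [sub_self, twistedDerivative_zero]
        exact iterate_derivative_eq_zero (Nat.lt_succ_self _)
      have hsum : ∀ z, ∑ j ∈ s, ((twistedDerivative (g j - g t))^[k] (A j)).eval z * y j z = 0 := by
        intro z
        simpa only [Finset.sum_cons, ht, eval_zero, zero_mul, zero_add] using
          sum_iterate_twistedDerivative_eq_zero hy (g t) hA k z
      have hi_zero : (twistedDerivative (g i - g t))^[k] (A i) = 0 :=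
        ih (fun j hj => hy j (Finset.mem_cons_of_mem hj))
          (hg.mono fun j hj => Finset.mem_cons_of_mem hj) hsum i hi
      have hgi : g i - g t ≠ 0 := sub_ne_zero.2 <|
        hg.ne (Finset.mem_cons_of_mem hi) (Finset.mem_cons_self t s) (ne_of_mem_of_not_mem hi hts)
      exact (twistedDerivative_injective hgi).iterate k (by rw [hi_zero, iterate_map_zero])
    refine (Finset.forall_mem_cons hts _).2 ⟨Polynomial.funext fun z => ?_, hA_tail⟩
    have hz := hA z
    rw [Finset.sum_cons, Finset.sum_eq_zero fun i hi => by rw [hA_tail i hi, eval_zero, zero_mul],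
      add_zero] at hz
    rw [eval_zero]
    exact (mul_eq_zero_iff_right ((hy t (Finset.mem_cons_self t s)).ne_zero z)).1 hz

theorem eq_zero_of_eval₂_eq_zero {g : ι → 𝕜[X]} {y : ι → 𝕜 → 𝕜}
    (hy : ∀ i, IsHyperexponential (g i) (y i)) (hg : LinearIndependent ℤ g)
    {f : MvPolynomial ι 𝕜[X]}
    (hf : ∀ z, f.eval₂ (evalRingHom z) (fun i => y i z) = 0) : f = 0 := by
  have hg_inj : Function.Injective (Finsupp.linearCombination ℕ g) :=
    hg.restrict_scalars fun a b => by simp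
  have hmonomial (d : ι →₀ ℕ) : IsHyperexponential (Finsupp.linearCombination ℕ g d)
      (∏ i ∈ d.support, y i ^ d i) :=
    prod fun i _ => (hy i).pow (d i)
  ext1 d
  by_cases hd : d ∈ f.support
  · refine coeff_eq_zero_of_sum_eq_zero (A := fun d => MvPolynomial.coeff d f)
      (fun d _ => hmonomial d) hg_inj.injOn (fun z => ?_) d hd
    simpa [MvPolynomial.eval₂_eq] using hf z
  · exact MvPolynomial.notMem_support_iff.1 hd

end IsHyperexponential

section SubstRight

variable {R : Type*} [CommSemiring R] {n m : ℕ}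

/-- The substitution `f(w, y) ↦ f(w, Q)`, as a polynomial in `w` with coefficients in `R[X]`. -/
noncomputable def substRight (Q : Fin m → R[X]) :
    MvPolynomial (Fin (n + m)) R →ₐ[R] MvPolynomial (Fin n) R[X] :=
  MvPolynomial.aeval (Fin.append MvPolynomial.X fun j => MvPolynomial.C (Q j))

lemma eval₂_substRight (Q : Fin m → R[X]) (f : MvPolynomial (Fin (n + m)) R) (w : Fin n → R)
    (z : R) :
    (substRight Q f).eval₂ (evalRingHom z) w =
      f.eval (Fin.append w fun j => (Q j).eval z) := by
  suffices h : (MvPolynomial.eval₂Hom (evalRingHom z) w).comp (substRight Q).toRingHom =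
      MvPolynomial.eval (Fin.append w fun j => (Q j).eval z) from DFunLike.congr_fun h f
  refine MvPolynomial.ringHom_ext (fun r => ?_) fun i => ?_
  · simp [substRight]
  · cases i using Fin.addCases <;> simp [substRight]

end SubstRight

lemma linearIndependent_derivative {R ι : Type*} [Ring R] [IsAddTorsionFree R] [Fintype ι]
    {P : ι → R[X]} (hP : ∀ k : ι → ℤ, k ≠ 0 → 0 < (∑ i, k i • P i).natDegree) :
    LinearIndependent ℤ fun i => derivative (P i) := by
  rw [Fintype.linearIndependent_iff]
  intro k hk
  suffices k = 0 from congrFun this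
  by_contra hk0
  have hderiv : derivative (∑ i, k i • P i) = 0 := by simpa only [map_sum, map_zsmul] using hk
  exact (hP k hk0).ne' (derivative_eq_zero.1 hderiv)

theorem jet_closure_product_torus_general {𝕜 : Type*} [NontriviallyNormedField 𝕜] {n m : ℕ}
    {g : Fin n → 𝕜[X]} {y : Fin n → 𝕜 → 𝕜} (hy : ∀ i, IsHyperexponential (g i) (y i))
    (hg : LinearIndependent ℤ g) (Q : Fin m → 𝕜[X]) (R : MvPolynomial (Fin (n + m)) 𝕜) :
    (∀ z, MvPolynomial.eval (Fin.append (fun i => y i z) fun j => (Q j).eval z) R = 0) ↔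
      ∀ (w : Fin n → 𝕜) (z : 𝕜), MvPolynomial.eval (Fin.append w fun j => (Q j).eval z) R = 0 := by
  refine ⟨fun h w z => ?_, fun h z => h _ z⟩
  have hR : substRight Q R = 0 :=
    IsHyperexponential.eq_zero_of_eval₂_eq_zero hy hg fun z => by rw [eval₂_substRight, h z]
  rw [← eval₂_substRight, hR, MvPolynomial.eval₂_zero]

/-- Let `P₁, …, P_n` be polynomials such that every nontrivial `ℤ`-linear
combination `k₁P₁ + ⋯ + k_nP_n` (with `(k₁,…,k_n) ≠ 0`) is nonconstant, and let
`Q₁, …, Q_m` be arbitrary polynomials. Then for a polynomial `R` in `n + m` variables,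
`R(exp(P₁ z), …, exp(P_n z), Q₁(z), …, Q_m(z)) = 0` for all `z` iff
`R(w₁, …, w_n, Q₁(z), …, Q_m(z)) = 0` for all `w ∈ ℂ^n` and all `z`. -/
theorem jet_closure_product_torus (n m : ℕ) (hn : 1 ≤ n) (hm : 1 ≤ m)
    (P : Fin n → Polynomial ℂ)
    (hP : ∀ k : Fin n → ℤ, k ≠ 0 → 0 < (∑ i : Fin n, k i • P i).natDegree)
    (Q : Fin m → Polynomial ℂ) (R : MvPolynomial (Fin (n + m)) ℂ) :
    (∀ z : ℂ, MvPolynomial.eval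
        (Fin.append (fun i : Fin n => Complex.exp ((P i).eval z))
          (fun j : Fin m => (Q j).eval z)) R = 0)
    ↔ (∀ (w : Fin n → ℂ) (z : ℂ), MvPolynomial.eval
        (Fin.append w (fun j : Fin m => (Q j).eval z)) R = 0) :=
  jet_closure_product_torus_general (fun i => isHyperexponential_cexp (P i))
    (linearIndependent_derivative hP) Q R
end

section
/- Let n ≥ 1, let X ⊆ ℂ^n be a Zariski closed set, and let I(X) denote the set of all polynomials in n variables vanishing on X. Let S ⊆ X be a subset that is Zariski dense in X, i.e., every polynomial vanishing on S vanishes on X. Let v ∈ ℂ^n and suppose that for every h ∈ I(X) the directional derivative D_v h := v₁·∂h/∂x₁ + ⋯ + v_n·∂h/∂x_n vanishes identically on S. Then X is invariant under translation by the one-parameter group generated by v: for every x ∈ X and every t ∈ ℂ, the point x + t·v lies in X. -/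
/-!
Density turns the hypothesis into `D_v I(X) ⊆ I(X)`, so all iterates `D_v^k h` of a polynomial
`h ∈ I(X)` vanish on `X`. Fix `x ∈ X` and restrict `h` to the line `t ↦ x + t • v`: the result is a
polynomial in `t` whose `k`-th derivative at `0` is `(D_v^k h)(x) = 0`. As the
coefficients are torsion-free, it is the zero polynomial, so `h (x + t • v) = 0` for all `t`.
-/

open MvPolynomial

theorem derivation_sum_apply {R A M ι : Type*} [CommSemiring R] [CommSemiring A]
    [AddCommMonoid M] [Algebra R A] [Module A M] [Module R M] (s : Finset ι)
    (D : ι → Derivation R A M) (a : A) : (∑ i ∈ s, D i) a = ∑ i ∈ s, D i a := by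
  simpa only [Derivation.coeFnAddMonoidHom_apply, Finset.sum_apply] using
    congrFun (map_sum Derivation.coeFnAddMonoidHom D s) a

theorem eq_zero_of_forall_eval_iterate_derivative_eq_zero {R : Type*} [Semiring R]
    [IsAddTorsionFree R] {p : Polynomial R} (r : R)
    (hp : ∀ k, (Polynomial.derivative^[k] p).eval r = 0) : p = 0 := by
  refine Polynomial.eq_zero_of_hasseDeriv_eq_zero p r fun k => ?_
  have h : k.factorial • (Polynomial.hasseDeriv k p).eval r = 0 := by
    rw [← Polynomial.eval_smul, ← LinearMap.smul_apply, Polynomial.factorial_smul_hasseDeriv, hp k]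
  exact (nsmul_eq_zero_iff_right k.factorial_ne_zero).mp h

section LineRestriction

variable {σ R : Type*} [CommSemiring R]

/-- The directional derivative `D_v`, encoded as the derivation with `X i ↦ C (v i)` rather than as
`∑ i, v i · ∂/∂x_i`, so that it also makes sense in infinitely many variables. -/
noncomputable def directionalDerivation (v : σ → R) :
    Derivation R (MvPolynomial σ R) (MvPolynomial σ R) :=
  mkDerivation R fun i => C (v i)

theorem directionalDerivation_eq_sum_pderiv [Fintype σ] (v : σ → R) (p : MvPolynomial σ R) :
    directionalDerivation v p = ∑ i, C (v i) * pderiv i p := by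
  classical
  have h : directionalDerivation v = ∑ i, (C (v i) : MvPolynomial σ R) • pderiv i :=
    derivation_ext fun j => by
      simp [directionalDerivation, derivation_sum_apply, pderiv_X, Pi.single_apply]
  simp only [h, derivation_sum_apply, Derivation.smul_apply, smul_eq_mul]

/-- Restriction of a polynomial to the line `t ↦ x + t • v`, as a polynomial in `t`. -/
noncomputable def restrictLine (x v : σ → R) : MvPolynomial σ R →ₐ[R] Polynomial R :=
  aeval fun i => Polynomial.C (x i) + Polynomial.C (v i) * Polynomial.X

theorem eval_restrictLine (x v : σ → R) (t : R) (p : MvPolynomial σ R) :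
    (restrictLine x v p).eval t = eval (x + t • v) p := by
  have h : (Polynomial.aeval t).comp (restrictLine x v) = aeval (x + t • v) :=
    algHom_ext fun i => by simp [restrictLine, mul_comm t]
  simpa [Polynomial.aeval_def, aeval_eq_eval] using DFunLike.congr_fun h p

theorem derivative_restrictLine (x v : σ → R) (p : MvPolynomial σ R) :
    (restrictLine x v p).derivative = restrictLine x v (directionalDerivation v p) := by
  induction p using MvPolynomial.induction_on with
  | C a => simp [restrictLine]
  | add p q hp hq => simp only [map_add, hp, hq]
  | mul_X p i hp =>
    have hX : (restrictLine x v (X i)).derivative = restrictLine x v (C (v i)) := by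
      simp [restrictLine]
    have hD : directionalDerivation v (X i) = C (v i) := mkDerivation_X R _ i
    rw [map_mul, Polynomial.derivative_mul, hp, hX, Derivation.leibniz, hD]
    simp only [smul_eq_mul, map_add, map_mul]
    ring

theorem iterate_derivative_restrictLine (x v : σ → R) (k : ℕ) (p : MvPolynomial σ R) :
    Polynomial.derivative^[k] (restrictLine x v p) =
      restrictLine x v ((directionalDerivation v)^[k] p) :=
  have h : Function.Semiconj (restrictLine x v) (directionalDerivation v) Polynomial.derivative :=
    fun q => (derivative_restrictLine x v q).symm
  (h.iterate_right k p).symm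

theorem eval_add_smul_eq_zero_of_iterate_directionalDerivation [IsAddTorsionFree R]
    {x v : σ → R} {p : MvPolynomial σ R}
    (hp : ∀ k, eval x ((directionalDerivation v)^[k] p) = 0) (t : R) :
    eval (x + t • v) p = 0 := by
  have h : restrictLine x v p = 0 := eq_zero_of_forall_eval_iterate_derivative_eq_zero 0 fun k => by
    rw [iterate_derivative_restrictLine, eval_restrictLine, zero_smul, add_zero, hp k]
  rw [← eval_restrictLine, h, Polynomial.eval_zero]

end LineRestriction

theorem zariski_closed_invariant_under_flow_general {σ R : Type*} [CommSemiring R]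
    [IsAddTorsionFree R] {X S : Set (σ → R)}
    (hX : ∃ T : Set (MvPolynomial σ R), X = {x | ∀ P ∈ T, eval x P = 0})
    (hdense : ∀ P : MvPolynomial σ R, (∀ s ∈ S, eval s P = 0) → ∀ x ∈ X, eval x P = 0)
    {v : σ → R}
    (hder : ∀ h : MvPolynomial σ R, (∀ x ∈ X, eval x h = 0) →
      ∀ s ∈ S, eval s (directionalDerivation v h) = 0) :
    ∀ x ∈ X, ∀ t : R, x + t • v ∈ X := by
  let I : Set (MvPolynomial σ R) := {h | ∀ x ∈ X, eval x h = 0}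
  have hI : Set.MapsTo (directionalDerivation v) I I := fun h hh => hdense _ (hder h hh)
  have hflow : ∀ h ∈ I, ∀ x ∈ X, ∀ t : R, eval (x + t • v) h = 0 := fun h hh x hx =>
    eval_add_smul_eq_zero_of_iterate_directionalDerivation fun k => hI.iterate k hh x hx
  obtain ⟨T, rfl⟩ := hX
  exact fun x hx t P hP => hflow P (fun y hy => hy P hP) x hx t

/-- Let `X ⊆ ℂ^n` be Zariski closed, `S ⊆ X` Zariski dense in `X`, and
`v ∈ ℂ^n`. If for every polynomial `h` vanishing on `X` the directional derivative
`D_v h = ∑ i, v i · ∂h/∂x_i` vanishes identically on `S`, then `X` is invariant under the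
one-parameter group generated by `v`: `x + t • v ∈ X` for all `x ∈ X`, `t ∈ ℂ`. -/
theorem zariski_closed_invariant_under_flow (n : ℕ) (hn : 1 ≤ n)
    (X : Set (Fin n → ℂ))
    (hX : ∃ T : Set (MvPolynomial (Fin n) ℂ),
      X = {x : Fin n → ℂ | ∀ P ∈ T, MvPolynomial.eval x P = 0})
    (S : Set (Fin n → ℂ)) (hSX : S ⊆ X)
    (hdense : ∀ P : MvPolynomial (Fin n) ℂ,
      (∀ s ∈ S, MvPolynomial.eval s P = 0) → ∀ x ∈ X, MvPolynomial.eval x P = 0)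
    (v : Fin n → ℂ)
    (hder : ∀ h : MvPolynomial (Fin n) ℂ, (∀ x ∈ X, MvPolynomial.eval x h = 0) →
      ∀ s ∈ S, MvPolynomial.eval s
        (∑ i : Fin n, MvPolynomial.C (v i) * MvPolynomial.pderiv i h) = 0) :
    ∀ x ∈ X, ∀ t : ℂ, (x + t • v) ∈ X :=
  zariski_closed_invariant_under_flow_general hX hdense
    (by simpa only [directionalDerivation_eq_sum_pderiv] using hder)
end
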